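/- Let E be an n×n real symmetric positive definite matrix (viewed as complex Hermitian), F an n×n Hermitian positive definite complex matrix with E ≥ F⁻¹ in the Loewner order, and G an n×n real symmetric positive semidefinite matrix with tr G = 1. Then tr(G log E) ≥ −tr(G log F); equivalently, the weighted geometric means satisfy exp(tr(G log E)) ≥ 1/exp(tr(G log F)). In particular, for G = I/n this gives (det E)^{1/n} ≥ (det F)^{−1/n}. -/

import Mathlib

open Matrix ComplexOrder

/-- The matrix logarithm `log X` of a positive definite Hermitian matrix, defined by applying
the natural logarithm to the eigenvalues in a spectral decomposition. -/
noncomputable def matLog {n : ℕ} {X : Matrix (Fin n) (Fin n) ℂ} (hX : X.IsHermitian) :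
    Matrix (Fin n) (Fin n) ℂ :=
  hX.cfc Real.log

open scoped MatrixOrder Matrix.Norms.L2Operator in
lemma matLog_eq_log {n : ℕ} {X : Matrix (Fin n) (Fin n) ℂ} (hX : X.IsHermitian) :
    matLog hX = CFC.log X := by
  rw [CFC.log, matLog, ← hX.cfc_eq]

open scoped MatrixOrder Matrix.Norms.L2Operator in
lemma log_inv_eq {n : ℕ} {F : Matrix (Fin n) (Fin n) ℂ} (hF : F.PosDef) :
    CFC.log F⁻¹ = - CFC.log F := by
  have h1 : NormedSpace.exp (CFC.log F) = F := CFC.exp_log F hF.isStrictlyPositive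
  have h2 : F⁻¹ = NormedSpace.exp (-CFC.log F) := by
    rw [Matrix.exp_neg, h1]
  rw [h2]
  exact CFC.log_exp _ (IsSelfAdjoint.neg IsSelfAdjoint.log)

open scoped MatrixOrder Matrix.Norms.L2Operator in
lemma matLog_add_posSemidef {n : ℕ} {E F : Matrix (Fin n) (Fin n) ℂ}
    (hE : E.PosDef) (hF : F.PosDef) (hEF : (E - F⁻¹).PosSemidef) :
    (matLog hE.1 + matLog hF.1).PosSemidef := by
  have h : F⁻¹ ≤ E := Matrix.le_iff.2 hEF
  have h2 := CFC.log_le_log h hF.inv.isStrictlyPositive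
  rw [log_inv_eq hF, Matrix.le_iff, sub_neg_eq_add] at h2
  rwa [matLog_eq_log, matLog_eq_log]

open scoped MatrixOrder Matrix.Norms.L2Operator in
lemma trace_mul_re_nonneg {n : ℕ} {G H : Matrix (Fin n) (Fin n) ℂ}
    (hG : G.PosSemidef) (hH : H.PosSemidef) : 0 ≤ (G * H).trace.re := by
  obtain ⟨B, rfl⟩ := CStarAlgebra.nonneg_iff_eq_star_mul_self.1 hG.nonneg
  rw [Matrix.mul_assoc, Matrix.trace_mul_comm]
  exact (Complex.le_def.1 (hH.mul_mul_conjTranspose_same B).trace_nonneg).1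

lemma det_re_eq {n : ℕ} {X : Matrix (Fin n) (Fin n) ℂ} (hX : X.PosDef) :
    X.det.re = ∏ i, hX.1.eigenvalues i := by
  rw [hX.1.det_eq_prod_eigenvalues, ← Complex.ofReal_re (∏ i, hX.1.eigenvalues i),
    Complex.ofReal_prod]
  rfl

lemma trace_matLog_re {n : ℕ} {X : Matrix (Fin n) (Fin n) ℂ} (hX : X.PosDef) :
    (matLog hX.1).trace.re = Real.log X.det.re := by
  rw [det_re_eq hX, Real.log_prod (fun i _ => (hX.eigenvalues_pos i).ne'), matLog,
    Matrix.IsHermitian.cfc, Unitary.conjStarAlgAut_apply, Matrix.trace_mul_comm, ← mul_assoc]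
  simp [Matrix.trace]

lemma det_re_pos {n : ℕ} {X : Matrix (Fin n) (Fin n) ℂ} (hX : X.PosDef) :
    0 < X.det.re := by
  rw [det_re_eq hX]
  exact Finset.prod_pos fun i _ => hX.eigenvalues_pos i

/-- For a real symmetric positive definite `E`, a Hermitian positive definite `F`
with `E ≥ F⁻¹` in the Loewner order, and a real symmetric positive semidefinite weight `G`
with `tr G = 1`, we have `tr (G log E) ≥ -tr (G log F)`; equivalently
`exp (tr (G log E)) ≥ 1 / exp (tr (G log F))`.  In particular, for `G = I/n` this gives
`(det E)^(1/n) ≥ (det F)^(-1/n)`. -/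
theorem geometric_mean_qcrb {n : ℕ} (E F G : Matrix (Fin n) (Fin n) ℂ)
    (hEre : ∀ i j, (E i j).im = 0) (hE : E.PosDef)
    (hF : F.PosDef)
    (hEF : (E - F⁻¹).PosSemidef)
    (hGre : ∀ i j, (G i j).im = 0) (hG : G.PosSemidef) (hGtr : G.trace = 1) :
    (G * matLog hE.1).trace.re ≥ -((G * matLog hF.1).trace.re) ∧
    Real.exp ((G * matLog hE.1).trace.re) ≥ 1 / Real.exp ((G * matLog hF.1).trace.re) ∧
    (G = ((n : ℂ))⁻¹ • (1 : Matrix (Fin n) (Fin n) ℂ) →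
      (E.det.re) ^ ((n : ℝ))⁻¹ ≥ (F.det.re) ^ (-((n : ℝ))⁻¹)) := by
  have h1 : (G * matLog hE.1).trace.re ≥ -((G * matLog hF.1).trace.re) := by
    have h := trace_mul_re_nonneg hG (matLog_add_posSemidef hE hF hEF)
    rw [Matrix.mul_add, Matrix.trace_add, Complex.add_re] at h
    linarith
  refine ⟨h1, ?_, ?_⟩
  · rw [one_div, ← Real.exp_neg]
    exact Real.exp_le_exp.2 h1
  · intro hGn
    have key : ∀ {X : Matrix (Fin n) (Fin n) ℂ} (hX : X.PosDef),
        (G * matLog hX.1).trace.re = Real.log X.det.re * (n : ℝ)⁻¹ := by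
      intro X hX
      have hc : ((n : ℂ))⁻¹ = (((n : ℝ)⁻¹ : ℝ) : ℂ) := by push_cast; rfl
      rw [hGn, Matrix.smul_mul, Matrix.one_mul, Matrix.trace_smul, smul_eq_mul, hc,
        Complex.re_ofReal_mul, trace_matLog_re hX, mul_comm]
    rw [key hE, key hF] at h1
    rw [Real.rpow_def_of_pos (det_re_pos hE), Real.rpow_def_of_pos (det_re_pos hF)]
    apply Real.exp_le_exp.2
    linarith
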